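/- Let G be a group having a free subgroup of finite index. Then G is a Takahasi group: for every natural number M, every ascending chain H_1 ≤ H_2 ≤ H_3 ≤ ... of subgroups of G, each generated by at most M elements, is eventually constant. -/

import Mathlib

/-- A group `G` is a Takahasi group if for every `M : ℕ`, every ascending chain of
subgroups of `G`, each generated by at most `M` elements, is eventually constant. -/
def IsTakahasiGroup (G : Type*) [Group G] : Prop :=
  ∀ M : ℕ, ∀ H : ℕ → Subgroup G, (∀ i, H i ≤ H (i + 1)) →
    (∀ i, ∃ S : Finset G, Subgroup.closure (S : Set G) = H i ∧ S.card ≤ M) →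
    ∃ p, ∀ i, p ≤ i → H i = H p

/-!
A chain of boundedly generated subgroups of a free group has a free union. Abelianizing, finitely
many members of a basis of the union lie in one term of the chain and are independent there, so
their number is bounded; hence the union is finitely generated and is attained. If `F` has finite
index in `G`, Schreier's bound makes the traces on `F` of a chain boundedly generated. By the
modular law a term of the chain is determined by its trace on `F` and its image in the finite set
`G ⧸ F`, so the chain stabilizes once both of these do.
-/

section

variable {G : Type*} [Group G]

theorem exists_closure_finset_eq_card_le_iff {H : Subgroup G} {M : ℕ} :
    (∃ S : Finset G, Subgroup.closure (S : Set G) = H ∧ S.card ≤ M) ↔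
      ∃ _ : Group.FG H, Group.rank H ≤ M := by
  classical
  constructor
  · rintro ⟨S, rfl, hS⟩
    exact ⟨inferInstance, (Subgroup.rank_closure_finset_le_card S).trans hS⟩
  · rintro ⟨_, hM⟩
    obtain ⟨S, hcard, hS⟩ := Group.rank_spec H
    refine ⟨S.image H.subtype, ?_, Finset.card_image_le.trans (hcard.trans_le hM)⟩
    rw [Finset.coe_image, ← MonoidHom.map_closure, hS, ← MonoidHom.range_eq_map,
      Subgroup.range_subtype]

theorem isTakahasiGroup_iff_rank :
    IsTakahasiGroup G ↔ ∀ (M : ℕ) (H : ℕ →o Subgroup G) [∀ i, Group.FG (H i)],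
      (∀ i, Group.rank (H i) ≤ M) → ∃ p, ∀ i, p ≤ i → H i = H p := by
  simp only [IsTakahasiGroup, exists_closure_finset_eq_card_le_iff]
  constructor
  · intro hG M H _ hM
    exact hG M H (fun i ↦ H.mono i.le_succ) fun i ↦ ⟨inferInstance, hM i⟩
  · intro hG M H hH hM
    have (i : ℕ) : Group.FG (H i) := (hM i).1
    exact hG M ⟨H, monotone_nat_of_le_succ hH⟩ fun i ↦ (hM i).2

section FreeGroup

theorem card_le_rank_of_linearIndependent {ι R V : Type*} [Fintype ι] [Ring R]
    [StrongRankCondition R] [AddCommGroup V] [Module R V] [Group.FG G]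
    (φ : G →* Multiplicative V) {v : ι → V} (hv : LinearIndependent R v)
    (hφ : ∀ i, .ofAdd (v i) ∈ φ.range) : Fintype.card ι ≤ Group.rank G := by
  classical
  obtain ⟨S, hcard, hS⟩ := Group.rank_spec G
  let W := Submodule.span R (S.image (Multiplicative.toAdd ∘ φ) : Set V)
  have hW : (⊤ : Subgroup G) ≤ W.toAddSubgroup.toSubgroup.comap φ := by
    rw [← hS, Subgroup.closure_le]
    exact fun s hs ↦ Submodule.subset_span (Finset.mem_image_of_mem _ hs)
  have hvW : Set.range v ⊆ W := by
    rintro _ ⟨i, rfl⟩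
    obtain ⟨g, hg⟩ := hφ i
    have hgW : (φ g).toAdd ∈ W := hW (Subgroup.mem_top g)
    rwa [hg] at hgW
  rw [← hcard]
  calc Fintype.card ι ≤ (S.image (Multiplicative.toAdd ∘ φ)).card := by
        simpa only [Finset.coe_sort_coe, Fintype.card_coe, Cardinal.mk_fintype, Nat.cast_le] using
          linearIndependent_le_span' v hv _ hvW
    _ ≤ S.card := Finset.card_image_le

/-- The abelianization map of a free group with basis `b`, written additively: it sends a word to
the family of its exponent sums. -/
noncomputable def exponentSum {ι : Type*} (b : FreeGroupBasis ι G) : G →* Multiplicative (ι →₀ ℤ) :=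
  b.lift fun i ↦ .ofAdd (Finsupp.single i 1)

theorem exponentSum_basis {ι : Type*} (b : FreeGroupBasis ι G) (i : ι) :
    exponentSum b (b i) = .ofAdd (Finsupp.single i 1) :=
  congr_fun (b.lift.symm_apply_apply _) i

theorem card_le_rank_of_basis_mem_range {ι K : Type*} [Group K] [Group.FG G]
    (b : FreeGroupBasis ι K) (f : G →* K) {T : Finset ι} (hT : ∀ i ∈ T, b i ∈ f.range) :
    T.card ≤ Group.rank G := by
  have hli : LinearIndependent ℤ fun i : T ↦ (Finsupp.single (i : ι) 1 : ι →₀ ℤ) :=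
    (Finsupp.linearIndependent_single_one ℤ ι).comp _ Subtype.val_injective
  rw [← Fintype.card_coe]
  refine card_le_rank_of_linearIndependent ((exponentSum b).comp f) hli fun i ↦ ?_
  obtain ⟨g, hg⟩ := hT i i.2
  exact ⟨g, by rw [MonoidHom.comp_apply, hg, exponentSum_basis]⟩

theorem fg_of_finite_basis {ι : Type*} [Finite ι] (b : FreeGroupBasis ι G) : Group.FG G :=
  Group.fg_of_surjective (f := b.repr.symm.toMonoidHom) b.repr.symm.surjective

theorem exists_le_of_fg_of_le_iSup {ι : Type*} [Nonempty ι] {H : ι → Subgroup G}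
    (hH : Directed (· ≤ ·) H) {P : Subgroup G} (hP : P.FG) (hle : P ≤ ⨆ i, H i) :
    ∃ i, P ≤ H i := by
  obtain ⟨S, rfl⟩ := hP
  have hS : (S : Set G) ⊆ ⋃ i, (H i : Set G) := by
    rw [← Subgroup.coe_iSup_of_directed hH]
    exact Subgroup.subset_closure.trans hle
  obtain ⟨i, hi⟩ := hH.exists_mem_subset_of_finset_subset_biUnion hS
  exact ⟨i, (Subgroup.closure_le _).2 hi⟩

theorem fg_iSup_of_directed_of_rank_le [IsFreeGroup G] {ι : Type*} [Nonempty ι]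
    {H : ι → Subgroup G} (hH : Directed (· ≤ ·) H) [∀ i, Group.FG (H i)] {M : ℕ}
    (hM : ∀ i, Group.rank (H i) ≤ M) : (⨆ i, H i).FG := by
  classical
  obtain ⟨X, ⟨b⟩⟩ := IsFreeGroup.nonempty_basis (G := ↥(⨆ i, H i))
  have card_le (T : Finset X) : T.card ≤ M := by
    have hT : Subgroup.closure (T.image fun t ↦ (b t : G) : Set G) ≤ ⨆ i, H i := by
      simp [Subgroup.closure_le, Set.subset_def]
    obtain ⟨i, hi⟩ := exists_le_of_fg_of_le_iSup hH ⟨_, rfl⟩ hT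
    refine (card_le_rank_of_basis_mem_range b (Subgroup.inclusion (le_iSup H i))
      fun t ht ↦ ?_).trans (hM i)
    have hbt : (b t : G) ∈ H i :=
      hi (Subgroup.subset_closure (Finset.mem_image_of_mem (fun t ↦ (b t : G)) ht))
    exact ⟨⟨b t, hbt⟩, rfl⟩
  have : Finite X := by
    by_contra hinf
    rw [not_finite_iff_infinite] at hinf
    obtain ⟨T, hT⟩ := Infinite.exists_subset_card_eq X (M + 1)
    exact (card_le T).not_gt (by omega)
  exact (Group.fg_iff_subgroup_fg _).1 (fg_of_finite_basis b)

theorem isTakahasiGroup_of_isFreeGroup [IsFreeGroup G] : IsTakahasiGroup G := by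
  rw [isTakahasiGroup_iff_rank]
  intro M H _ hM
  have hH : Directed (· ≤ ·) H := H.mono.directed_le
  obtain ⟨p, hp⟩ := exists_le_of_fg_of_le_iSup hH (fg_iSup_of_directed_of_rank_le hH hM) le_rfl
  exact ⟨p, fun i hi ↦ ((le_iSup H i).trans hp).antisymm (H.mono hi)⟩

end FreeGroup

section FiniteIndex

/-- The two ways of viewing `F ⊓ H` as a subgroup, of `H` and of `F`, are isomorphic. -/
def subgroupOfComm (F H : Subgroup G) : F.subgroupOf H ≃* H.subgroupOf F where
  toFun x := ⟨⟨x, x.2⟩, x.1.2⟩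
  invFun x := ⟨⟨x, x.2⟩, x.1.2⟩
  map_mul' _ _ := rfl

variable (F H : Subgroup G) [F.FiniteIndex]

instance fg_subgroupOf [Group.FG H] : Group.FG (H.subgroupOf F) :=
  Group.fg_of_surjective (f := (subgroupOfComm F H).toMonoidHom) (subgroupOfComm F H).surjective

theorem rank_subgroupOf_le [Group.FG H] :
    Group.rank (H.subgroupOf F) ≤ F.index * Group.rank H := by
  have hindex : F.relIndex H ≤ F.index := by
    rw [← F.relIndex_top_right]
    exact Subgroup.relIndex_le_of_le_right le_top
      (F.relIndex_top_right ▸ Subgroup.FiniteIndex.index_ne_zero)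
  calc Group.rank (H.subgroupOf F)
      = Group.rank (F.subgroupOf H) := (Group.rank_congr (subgroupOfComm F H)).symm
    _ ≤ F.relIndex H * Group.rank H := Subgroup.rank_le_index_mul_rank _
    _ ≤ F.index * Group.rank H := Nat.mul_le_mul_right _ hindex

end FiniteIndex

theorem eq_of_le_of_subgroupOf_le_of_image_mk_subset {F H K : Subgroup G} (hHK : H ≤ K)
    (htrace : K.subgroupOf F ≤ H.subgroupOf F)
    (hcosets : (QuotientGroup.mk '' (K : Set G) : Set (G ⧸ F)) ⊆ QuotientGroup.mk '' (H : Set G)) :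
    H = K := by
  refine hHK.antisymm fun k hk ↦ ?_
  obtain ⟨h, hh, hhk⟩ := hcosets ⟨k, hk, rfl⟩
  have hF : h⁻¹ * k ∈ F := QuotientGroup.eq.1 hhk
  have hH : h⁻¹ * k ∈ H := htrace (x := ⟨_, hF⟩) (mul_mem (inv_mem (hHK hh)) hk)
  simpa using mul_mem hh hH

theorem IsTakahasiGroup.of_finiteIndex {F : Subgroup G} [F.FiniteIndex] (hF : IsTakahasiGroup F) :
    IsTakahasiGroup G := by
  rw [isTakahasiGroup_iff_rank] at hF ⊢
  intro M H _ hM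
  let traces : ℕ →o Subgroup F := ⟨fun i ↦ (H i).subgroupOf F, fun _ _ hij ↦
    Subgroup.comap_mono (H.mono hij)⟩
  let cosets : ℕ →o Set (G ⧸ F) := ⟨fun i ↦ QuotientGroup.mk '' (H i : Set G), fun _ _ hij ↦
    Set.image_mono (H.mono hij)⟩
  have (i : ℕ) : Group.FG (traces i) := fg_subgroupOf F (H i)
  obtain ⟨p, hp⟩ := hF (F.index * M) traces fun i ↦
    (rank_subgroupOf_le F (H i)).trans (Nat.mul_le_mul_left _ (hM i))
  obtain ⟨q, hq⟩ := WellFoundedGT.monotone_chain_condition cosets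
  refine ⟨max p q, fun i hi ↦ (eq_of_le_of_subgroupOf_le_of_image_mk_subset (F := F)
    (H.mono hi) ?_ ?_).symm⟩
  · exact ((hp i (le_of_max_le_left hi)).trans (hp _ (le_max_left p q)).symm).le
  · exact ((hq i (le_of_max_le_right hi)).symm.trans (hq _ (le_max_right p q))).le

end

/-- every group with a free subgroup of finite index (i.e. every virtually
free group) is a Takahasi group. -/
theorem isTakahasiGroup_of_virtually_free {G : Type*} [Group G] (F : Subgroup G)
    [IsFreeGroup ↥F] [F.FiniteIndex] : IsTakahasiGroup G :=
  IsTakahasiGroup.of_finiteIndex (isTakahasiGroup_of_isFreeGroup (G := F))
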